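/- Let 0 < r ≤ 1 and let N > ν/r. Let κ ≥ 1 and let δ = diag(δ_1,…,δ_d) be a diagonal matrix for which there exists t > 0 with κ^{−1} t^{a_i} ≤ δ_i ≤ κ t^{a_i} for all i. For n ∈ ℕ₀^d set U(n) := { y ∈ ℝ^d : |δ y − π(n + (1/2,…,1/2))|_a < 1 }. Then there exists a constant C, depending only on a, d, r, N and κ (in particular independent of δ and t), such that for every sequence of nonnegative reals (s_n)_{n∈ℕ₀^d} and every z ∈ ℝ^d: ∑_{n∈ℕ₀^d} s_n (1 + |δ z − π(n + (1/2,…,1/2))|_a)^{−N} ≤ C · M_r( ∑_{n∈ℕ₀^d} s_n 𝟙_{U(n)} )(z). -/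

import Mathlib

open MeasureTheory
open scoped ENNReal

noncomputable section

/-- The Euclidean norm on `ℝ^d`. -/
def euclNorm {d : ℕ} (x : Fin d → ℝ) : ℝ := Real.sqrt (∑ i, (x i) ^ 2)

/-- The anisotropic dilation `t^{-a} x`. -/
def aDilNeg {d : ℕ} (a : Fin d → ℝ) (t : ℝ) (x : Fin d → ℝ) : Fin d → ℝ :=
  fun i => t ^ (-(a i)) * x i

/-- `nrm` is the anisotropic quasi-norm `|·|_a`. -/
def IsAnisoNorm {d : ℕ} (a : Fin d → ℝ) (nrm : (Fin d → ℝ) → ℝ) : Prop :=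
  nrm 0 = 0 ∧ ∀ x : Fin d → ℝ, x ≠ 0 → 0 < nrm x ∧ euclNorm (aDilNeg a (nrm x) x) = 1

/-- The anisotropic (uncentered) maximal function
`M_θ f(x) = sup { (|B|⁻¹ ∫_B |f|^θ)^{1/θ} : B an anisotropic ball containing x }`,
with values in `ℝ≥0∞`. -/
def maxFn {d : ℕ} (nrm : (Fin d → ℝ) → ℝ) (θ : ℝ) (f : (Fin d → ℝ) → ℝ)
    (x : Fin d → ℝ) : ℝ≥0∞ :=
  ⨆ (z : Fin d → ℝ) (r : ℝ) (_ : 0 < r ∧ nrm (fun i => z i - x i) < r),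
    ((∫⁻ y in {y : Fin d → ℝ | nrm (fun i => z i - y i) < r},
        ENNReal.ofReal (|f y| ^ θ)) /
      volume {y : Fin d → ℝ | nrm (fun i => z i - y i) < r}) ^ (1 / θ)


lemma an_lt_coord {d : ℕ} {a : Fin d → ℝ} (ha : ∀ i, 1 ≤ a i)
    {nrm : (Fin d → ℝ) → ℝ} (hnrm : IsAnisoNorm a nrm) {x : Fin d → ℝ} {T : ℝ}
    (hT : 0 < T) (h : nrm x < T) (i : Fin d) : |x i| < T ^ (a i) := by
  by_cases hx : x = 0
  · subst hx; simpa using Real.rpow_pos_of_pos hT _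
  obtain ⟨hp, he⟩ := hnrm.2 x hx
  unfold euclNorm aDilNeg at he
  rw [Real.sqrt_eq_one] at he
  have h1 : (nrm x ^ (-(a i)) * x i) ^ 2 ≤ 1 := by
    rw [← he]
    exact Finset.single_le_sum (f := fun i => (nrm x ^ (-(a i)) * x i) ^ 2)
      (fun _ _ => sq_nonneg _) (Finset.mem_univ i)
  have h2 : |nrm x ^ (-(a i)) * x i| ≤ 1 := (sq_le_one_iff_abs_le_one _).1 h1
  have hpp := Real.rpow_pos_of_pos hp (a i)
  rw [Real.rpow_neg hp.le, abs_mul, abs_of_pos (inv_pos.2 hpp), inv_mul_le_iff₀ hpp, mul_one] at h2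
  exact h2.trans_lt (Real.rpow_lt_rpow hp.le h (by linarith [ha i]))

lemma an_of_coord {d : ℕ} (hd : 1 ≤ d) {a : Fin d → ℝ} (ha : ∀ i, 1 ≤ a i)
    {nrm : (Fin d → ℝ) → ℝ} (hnrm : IsAnisoNorm a nrm) {x : Fin d → ℝ} {T : ℝ}
    (hT : 0 < T) (h : ∀ i, |x i| < T ^ (a i) / d) : nrm x < T := by
  by_contra hcon
  push Not at hcon
  have hx : x ≠ 0 := by
    rintro rfl
    rw [hnrm.1] at hcon; linarith
  obtain ⟨hp, he⟩ := hnrm.2 x hx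
  unfold euclNorm aDilNeg at he
  rw [Real.sqrt_eq_one] at he
  have hd' : (1 : ℝ) ≤ d := by exact_mod_cast hd
  haveI : NeZero d := ⟨by omega⟩
  have h1 : ∀ i, (nrm x ^ (-(a i)) * x i) ^ 2 < (1 / (d:ℝ)) ^ 2 := by
    intro i
    have hpp := Real.rpow_pos_of_pos hp (a i)
    rw [sq_lt_sq, abs_of_pos (a := 1 / (d:ℝ)) (by positivity), abs_mul, Real.rpow_neg hp.le,
      abs_of_pos (inv_pos.2 hpp), inv_mul_lt_iff₀ hpp]
    refine (h i).trans_le ?_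
    rw [mul_one_div]
    gcongr
    linarith [ha i]
  have h2 : ∑ i, (nrm x ^ (-(a i)) * x i) ^ 2 < ∑ _i : Fin d, (1 / (d:ℝ)) ^ 2 :=
    Finset.sum_lt_sum_of_nonempty ⟨0, Finset.mem_univ _⟩ (fun i _ => h1 i)
  rw [he] at h2
  simp at h2
  have : (d:ℝ) * ((d:ℝ)^2)⁻¹ = (d:ℝ)⁻¹ := by field_simp
  rw [this] at h2
  have := inv_le_one_of_one_le₀ hd'
  linarith

lemma tsum_rpow_le {ι : Type*} (x : ι → ℝ≥0∞) {r : ℝ} (h0 : 0 < r) (h1 : r ≤ 1) :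
    (∑' n, x n) ^ r ≤ ∑' n, (x n) ^ r := by
  have hfin : ∀ S : Finset ι, (∑ n ∈ S, x n) ^ r ≤ ∑ n ∈ S, (x n) ^ r := by
    classical
    intro S
    induction S using Finset.induction_on with
    | empty => simp [h0]
    | insert b S hb ih =>
      rw [Finset.sum_insert hb, Finset.sum_insert hb]
      exact (ENNReal.rpow_add_le_add_rpow _ _ h0.le h1).trans (add_le_add le_rfl ih)
  rw [← ENNReal.le_rpow_inv_iff h0, ENNReal.tsum_eq_iSup_sum]
  refine iSup_le fun S => ?_
  rw [ENNReal.le_rpow_inv_iff h0]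
  exact (hfin S).trans (ENNReal.sum_le_tsum S)

/-- boxes inside `U(n)` -/
def boxP {d : ℕ} (δ : Fin d → ℝ) (n : Fin d → ℕ) : Set (Fin d → ℝ) :=
  Set.pi Set.univ fun i => Set.Ioo ((Real.pi * ((n i : ℝ) + 1 / 2) - 1 / d) / δ i)
    ((Real.pi * ((n i : ℝ) + 1 / 2) + 1 / d) / δ i)

lemma mem_boxP {d : ℕ} {δ : Fin d → ℝ} (hδ : ∀ i, 0 < δ i) {n : Fin d → ℕ} {y : Fin d → ℝ} :
    y ∈ boxP δ n ↔ ∀ i, |δ i * y i - Real.pi * ((n i : ℝ) + 1 / 2)| < 1 / d := by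
  unfold boxP
  simp only [Set.mem_pi, Set.mem_univ, true_implies, Set.mem_Ioo]
  refine forall_congr' fun i => ?_
  rw [div_lt_iff₀ (hδ i), lt_div_iff₀ (hδ i), abs_lt]
  constructor <;> rintro ⟨h1, h2⟩ <;> constructor <;> nlinarith

lemma vol_boxP {d : ℕ} (hd : 1 ≤ d) {δ : Fin d → ℝ} (n : Fin d → ℕ) (hδ : ∀ i, 0 < δ i) :
    volume (boxP δ n) = ENNReal.ofReal (∏ i, (2 / (d * δ i))) := by
  unfold boxP
  have hd' : (1 : ℝ) ≤ d := by exact_mod_cast hd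
  rw [Real.volume_pi_Ioo, ← ENNReal.ofReal_prod_of_nonneg]
  · congr 1; refine Finset.prod_congr rfl fun i _ => ?_
    congr 1
    have := hδ i
    field_simp
    ring
  · intro i _
    have := hδ i
    rw [sub_nonneg]
    have : (0:ℝ) < 1 / d := by positivity
    gcongr
    linarith

lemma U_disj {d : ℕ} {a : Fin d → ℝ} (ha : ∀ i, 1 ≤ a i)
    {nrm : (Fin d → ℝ) → ℝ} (hnrm : IsAnisoNorm a nrm) {δ : Fin d → ℝ} {n m : Fin d → ℕ}
    {y : Fin d → ℝ} (hn : nrm (fun i => δ i * y i - Real.pi * ((n i : ℝ) + 1 / 2)) < 1)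
    (hm : nrm (fun i => δ i * y i - Real.pi * ((m i : ℝ) + 1 / 2)) < 1) : n = m := by
  funext i
  have h1 := an_lt_coord ha hnrm one_pos hn i
  have h2 := an_lt_coord ha hnrm one_pos hm i
  simp only [Real.one_rpow, abs_lt] at h1 h2
  have hpi := Real.pi_gt_three
  rcases lt_trichotomy (n i) (m i) with h | h | h
  · have : (n i : ℝ) + 1 ≤ m i := by exact_mod_cast h
    nlinarith
  · exact h
  · have : (m i : ℝ) + 1 ≤ n i := by exact_mod_cast h
    nlinarith

set_option maxHeartbeats 1600000 in
lemma key_ball {d : ℕ} (hd : 1 ≤ d) {a : Fin d → ℝ} (ha : ∀ i, 1 ≤ a i)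
    {nrm : (Fin d → ℝ) → ℝ} (hnrm : IsAnisoNorm a nrm) {r κ : ℝ} (hr0 : 0 < r) (hκ : 1 ≤ κ)
    {δ : Fin d → ℝ} {t : ℝ} (ht : 0 < t)
    (hδ : ∀ i, κ⁻¹ * t ^ (a i) ≤ δ i ∧ δ i ≤ κ * t ^ (a i))
    {s : (Fin d → ℕ) → ℝ} (hs : ∀ n, 0 ≤ s n) (z : Fin d → ℝ) {T : ℝ} (hT : 1 ≤ T) 
    (f : (Fin d → ℝ) → ℝ)
    (hf : f = (fun y => ∑' n : Fin d → ℕ,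
                  s n * ({y' : Fin d → ℝ |
                      nrm (fun i => δ i * y' i - Real.pi * ((n i : ℝ) + 1 / 2)) < 1}).indicator
                    (fun _ => (1 : ℝ)) y)) :
    (∑' n : {n : Fin d → ℕ // nrm (fun i => δ i * z i - Real.pi * ((n i : ℝ) + 1 / 2)) < T},
        ENNReal.ofReal (s n ^ r)) ≤
      ENNReal.ofReal ((d * κ) ^ d * (2 * κ * d) ^ (∑ i, a i) * T ^ (∑ i, a i)) *
        (maxFn nrm r f z) ^ r := by
  have hd' : (1 : ℝ) ≤ d := by exact_mod_cast hd
  have hT0 : 0 < T := by linarith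
  have hκ0 : 0 < κ := by linarith
  have hδ0 : ∀ i, 0 < δ i := fun i =>
    lt_of_lt_of_le (mul_pos (inv_pos.2 hκ0) (Real.rpow_pos_of_pos ht _)) (hδ i).1
  set R : ℝ := 2 * κ * d * T / t with hR
  have hR0 : 0 < R := by positivity
  set B : Set (Fin d → ℝ) := {y | nrm (fun i => z i - y i) < R} with hB
  have hfP : ∀ n, ∀ y ∈ boxP δ n, f y = s n := by
    intro n y hy
    have hyn : nrm (fun i => δ i * y i - Real.pi * ((n i : ℝ) + 1 / 2)) < 1 := by
      apply an_of_coord hd ha hnrm one_pos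
      intro i
      rw [Real.one_rpow]
      exact (mem_boxP hδ0).1 hy i
    rw [hf]
    simp only
    rw [tsum_eq_single n]
    · rw [Set.indicator_of_mem (by exact hyn), mul_one]
    · intro m hm
      rw [Set.indicator_of_notMem, mul_zero]
      intro hmem
      exact hm (U_disj ha hnrm hmem hyn)
  have hdisj : Pairwise (Function.onFun Disjoint (fun n : {n : Fin d → ℕ // nrm (fun i => δ i * z i - Real.pi * ((n i : ℝ) + 1 / 2)) < T} => boxP δ n.1)) := by
    intro n m hnm
    rw [Function.onFun, Set.disjoint_left]
    intro y hy1 hy2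
    apply hnm
    apply Subtype.ext
    apply U_disj ha hnrm (δ := δ) (y := y)
    all_goals
      apply an_of_coord hd ha hnrm one_pos
      intro i
      rw [Real.one_rpow]
    · exact (mem_boxP hδ0).1 hy1 i
    · exact (mem_boxP hδ0).1 hy2 i
  have hsub : (⋃ n : {n : Fin d → ℕ // nrm (fun i => δ i * z i - Real.pi * ((n i : ℝ) + 1 / 2)) < T}, boxP δ n.1) ⊆ B := by
    intro y hy
    rw [Set.mem_iUnion] at hy
    obtain ⟨⟨n, hn⟩, hy⟩ := hy
    apply an_of_coord hd ha hnrm hR0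
    intro i
    have h1 := (mem_boxP hδ0).1 hy i
    have h2 := an_lt_coord ha hnrm hT0 hn i
    have hTa : 1 ≤ T ^ (a i) := Real.one_le_rpow hT (by linarith [ha i])
    have hta := Real.rpow_pos_of_pos ht (a i)
    have h3 : δ i * |z i - y i| < 2 * T ^ (a i) := by
      have h4 : (1:ℝ) / d ≤ 1 := by rw [div_le_one (by linarith)]; exact hd'
      have e0 : δ i * |z i - y i| = |δ i * (z i - y i)| := by
        rw [abs_mul, abs_of_pos (hδ0 i)]
      rw [e0]
      rw [abs_lt] at *
      simp only at h1 h2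
      constructor <;> nlinarith
    have h5 : κ⁻¹ * t ^ (a i) * |z i - y i| < 2 * T ^ (a i) :=
      lt_of_le_of_lt (mul_le_mul_of_nonneg_right (hδ i).1 (abs_nonneg _)) h3
    have h6 : |z i - y i| < 2 * κ * T ^ (a i) / t ^ (a i) := by
      rw [lt_div_iff₀ hta]
      have := mul_lt_mul_of_pos_left h5 hκ0
      have e : κ * (κ⁻¹ * t ^ (a i) * |z i - y i|) = |z i - y i| * t ^ (a i) := by
        field_simp
      rw [e] at this
      linarith
    refine h6.trans_le ?_
    have h7 : (2 * κ * d) ≤ (2 * κ * d) ^ (a i) := by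
      apply Real.self_le_rpow_of_one_le _ (ha i)
      nlinarith
    rw [hR, Real.div_rpow (by positivity) ht.le, Real.mul_rpow (by positivity) hT0.le,
      le_div_iff₀ (by linarith)]
    calc 2 * κ * T ^ (a i) / t ^ (a i) * d = (2 * κ * d) * T ^ (a i) / t ^ (a i) := by ring
      _ ≤ _ := by gcongr
  have hvolB : volume B ≤ ENNReal.ofReal (∏ i, (2 * R ^ (a i))) := by
    have : B ⊆ Set.pi Set.univ fun i => Set.Ioo (z i - R ^ (a i)) (z i + R ^ (a i)) := by
      intro y hy i _
      have h := an_lt_coord ha hnrm hR0 hy i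
      rw [abs_lt] at h
      constructor <;> linarith [h.1, h.2]
    refine (measure_mono this).trans ?_
    rw [Real.volume_pi_Ioo, ← ENNReal.ofReal_prod_of_nonneg]
    · apply le_of_eq
      congr 1
      refine Finset.prod_congr rfl fun i _ => ?_
      ring
    · intro i _
      have := Real.rpow_pos_of_pos hR0 (a i)
      linarith
  have hMB : (∫⁻ y in B, ENNReal.ofReal (|f y| ^ r)) ≤ (maxFn nrm r f z) ^ r * volume B := by
    by_cases hv : volume B = 0
    · rw [setLIntegral_measure_zero _ _ hv]; exact zero_le
    have hle : ((∫⁻ y in B, ENNReal.ofReal (|f y| ^ r)) / volume B) ^ (1 / r) ≤ maxFn nrm r f z := by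
      unfold maxFn
      refine le_iSup_of_le z (le_iSup_of_le R (le_iSup_of_le ⟨hR0, ?_⟩ le_rfl))
      have : (fun i => z i - z i) = (0 : Fin d → ℝ) := by funext i; simp
      rw [this, hnrm.1]; exact hR0
    rw [one_div, ENNReal.rpow_inv_le_iff hr0] at hle
    rwa [ENNReal.div_le_iff hv (hvolB.trans_lt ENNReal.ofReal_lt_top).ne] at hle
  have hsum : (∑' n : {n : Fin d → ℕ // nrm (fun i => δ i * z i - Real.pi * ((n i : ℝ) + 1 / 2)) < T},
        ENNReal.ofReal (s n ^ r)) * ENNReal.ofReal (∏ i, (2 / (d * δ i))) ≤ ∫⁻ y in B, ENNReal.ofReal (|f y| ^ r) := by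
    refine le_trans (le_of_eq ?_) (lintegral_mono_set hsub)
    have hmeas : ∀ n, MeasurableSet (boxP δ n) := fun n =>
      MeasurableSet.univ_pi fun i => measurableSet_Ioo
    have hU := lintegral_iUnion (μ := volume) (s := fun n : {n : Fin d → ℕ // nrm (fun i => δ i * z i - Real.pi * ((n i : ℝ) + 1 / 2)) < T} => boxP δ n.1) (fun n => hmeas n.1) hdisj (fun y => ENNReal.ofReal (|f y| ^ r))
    rw [hU, ← ENNReal.tsum_mul_right]
    refine tsum_congr fun n => ?_
    have hc : (∫⁻ y in boxP δ n.1, ENNReal.ofReal (|f y| ^ r)) =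
        ∫⁻ _y in boxP δ n.1, ENNReal.ofReal (s n.1 ^ r) := by
      apply setLIntegral_congr_fun (hmeas n.1)
      intro y hy
      have := hfP n.1 y hy
      simp only [this, abs_of_nonneg (hs n.1)]
    rw [hc, setLIntegral_const, vol_boxP hd _ hδ0]
  have hprod : (∏ i, (2 * R ^ (a i))) ≤ ((d * κ) ^ d * (2 * κ * d) ^ (∑ i, a i) * T ^ (∑ i, a i)) * (∏ i, (2 / (d * δ i))) := by
    rw [Real.rpow_sum_of_pos (by positivity), Real.rpow_sum_of_pos hT0]
    have : ((d:ℝ) * κ) ^ d = ∏ _i : Fin d, ((d:ℝ) * κ) := by simp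
    rw [this, ← Finset.prod_mul_distrib, ← Finset.prod_mul_distrib, ← Finset.prod_mul_distrib]
    apply Finset.prod_le_prod
    · intro i _; positivity
    intro i _
    have hta := Real.rpow_pos_of_pos ht (a i)
    have := hδ0 i
    have hh := (hδ i).2
    rw [hR, Real.div_rpow (by positivity) ht.le, Real.mul_rpow (by positivity) hT0.le]
    have h8 : 1 / t ^ (a i) ≤ κ / δ i := by
      rw [div_le_div_iff₀ hta this]; linarith
    calc 2 * ((2 * κ * d) ^ (a i) * T ^ (a i) / t ^ (a i))
        = 2 * ((2 * κ * d) ^ (a i) * T ^ (a i)) * (1 / t ^ (a i)) := by ring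
      _ ≤ 2 * ((2 * κ * d) ^ (a i) * T ^ (a i)) * (κ / δ i) := by gcongr
      _ = _ := by field_simp
  set V : ℝ := ∏ i, (2 / (d * δ i)) with hV
  have hV0 : 0 < V := Finset.prod_pos fun i _ => by
    have := hδ0 i
    positivity
  have hfinal := hsum.trans (hMB.trans (mul_le_mul_right (hvolB.trans (ENNReal.ofReal_le_ofReal hprod)) _))
  rw [ENNReal.ofReal_mul (q := V) (by positivity), ← mul_assoc, ENNReal.mul_le_mul_iff_left (by simpa using hV0) ENNReal.ofReal_ne_top] at hfinal
  rw [mul_comm]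
  exact hfinal

/-- key estimate in Lemma B.2: for `0 < r ≤ 1`, `N > ν/r`, `κ ≥ 1`, and a
diagonal matrix `δ` with `κ⁻¹ t^{a_i} ≤ δ_i ≤ κ t^{a_i}` for some `t > 0`, one has,
uniformly in `δ`, `t`, the nonnegative sequence `(s_n)` and `z ∈ ℝ^d`:
`∑_n s_n (1 + |δz − π(n+½)|_a)^{−N} ≤ C · M_r(∑_n s_n 𝟙_{U(n)})(z)`,
with `U(n) = {y : |δy − π(n+½)|_a < 1}`. -/
theorem stmt17 (d : ℕ) (hd : 1 ≤ d) (a : Fin d → ℝ) (ha : ∀ i, 1 ≤ a i)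
    (nrm : (Fin d → ℝ) → ℝ) (hnrm : IsAnisoNorm a nrm)
    (r N κ : ℝ) (hr0 : 0 < r) (hr1 : r ≤ 1) (hN : (∑ i, a i) / r < N) (hκ : 1 ≤ κ) :
    ∃ C : ℝ, 0 < C ∧
      ∀ (δ : Fin d → ℝ) (t : ℝ), 0 < t →
        (∀ i, κ⁻¹ * t ^ (a i) ≤ δ i ∧ δ i ≤ κ * t ^ (a i)) →
        ∀ s : (Fin d → ℕ) → ℝ, (∀ n, 0 ≤ s n) →
        ∀ z : Fin d → ℝ,
          (∑' n : Fin d → ℕ,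
              ENNReal.ofReal (s n *
                (1 + nrm (fun i => δ i * z i - Real.pi * ((n i : ℝ) + 1 / 2))) ^ (-N))) ≤
            ENNReal.ofReal C *
              maxFn nrm r
                (fun y => ∑' n : Fin d → ℕ,
                  s n * ({y' : Fin d → ℝ |
                      nrm (fun i => δ i * y' i - Real.pi * ((n i : ℝ) + 1 / 2)) < 1}).indicator
                    (fun _ => (1 : ℝ)) y) z := by

  set ν := ∑ i, a i with hν
  have hνN : ν - N * r < 0 := by
    rw [div_lt_iff₀ hr0] at hN; linarith
  have hd' : (1 : ℝ) ≤ d := by exact_mod_cast hd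
  have hκ0 : 0 < κ := by linarith
  have hν0 : 0 ≤ ν := Finset.sum_nonneg fun i _ => by linarith [ha i]
  have hNr : 0 < N * r := by linarith
  have hN0 : 0 < N := pos_of_mul_pos_left hNr hr0.le
  set C0 : ℝ := (d * κ) ^ d * (2 * κ * d) ^ ν with hC0
  have hC0p : 0 < C0 := by positivity
  set q : ℝ := 2 ^ (ν - N * r) with hq
  have hq0 : 0 < q := by positivity
  have hq1 : q < 1 := Real.rpow_lt_one_of_one_lt_of_neg (by norm_num) hνN
  set K : ℝ := 2 ^ (N * r) * C0 * (1 - q)⁻¹ with hK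
  have hK0 : 0 < K := by
    have : 0 < (1 - q)⁻¹ := inv_pos.2 (by linarith)
    positivity
  refine ⟨K ^ (1 / r), by positivity, ?_⟩
  intro δ t ht hδ s hs z
  set f : (Fin d → ℝ) → ℝ := (fun y => ∑' n : Fin d → ℕ,
                  s n * ({y' : Fin d → ℝ |
                      nrm (fun i => δ i * y' i - Real.pi * ((n i : ℝ) + 1 / 2)) < 1}).indicator
                    (fun _ => (1 : ℝ)) y) with hf
  have key := fun (k : ℕ) => key_ball hd ha hnrm hr0 hκ ht hδ hs z (T := 2 ^ k) (one_le_pow₀ (by norm_num)) f hf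
  simp only [← hν, ← hC0] at key
  set M := maxFn nrm r f z with hM
  set ρ : (Fin d → ℕ) → ℝ := fun n => nrm (fun i => δ i * z i - Real.pi * ((n i : ℝ) + 1 / 2)) with hρ
  have hρ0 : ∀ n, 0 ≤ ρ n := by
    intro n
    by_cases h : (fun i => δ i * z i - Real.pi * ((n i : ℝ) + 1 / 2)) = 0
    · simp only [hρ]; rw [h, hnrm.1]
    · exact (hnrm.2 _ h).1.le
  have hterm : ∀ n, (ENNReal.ofReal (s n * (1 + ρ n) ^ (-N))) ^ r ≤
      ∑' k : ℕ, ENNReal.ofReal (2 ^ (N * r) * (2 ^ k) ^ (-(N * r))) *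
        Set.indicator {n | ρ n < 2 ^ k} (fun n => ENNReal.ofReal (s n ^ r)) n := by
    intro n
    have h1p : 0 < 1 + ρ n := by linarith [hρ0 n]
    rw [ENNReal.ofReal_rpow_of_nonneg (mul_nonneg (hs n) (by positivity)) hr0.le,
      Real.mul_rpow (hs n) (by positivity), ← Real.rpow_mul h1p.le]
    have hex : ∃ k : ℕ, ρ n < 2 ^ k := pow_unbounded_of_one_lt _ (by norm_num)
    classical
    obtain ⟨k, hk, hkm⟩ : ∃ k : ℕ, ρ n < 2 ^ k ∧ (2:ℝ) ^ k ≤ 2 * (1 + ρ n) := by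
      refine ⟨Nat.find hex, Nat.find_spec hex, ?_⟩
      rcases h : Nat.find hex with _ | j
      · simp; linarith [hρ0 n]
      · have := Nat.find_min hex (m := j) (by omega)
        push Not at this
        rw [pow_succ]; linarith
    refine le_trans ?_ (ENNReal.le_tsum k)
    rw [Set.indicator_of_mem (by exact hk), ← ENNReal.ofReal_mul (by positivity), mul_comm]
    apply ENNReal.ofReal_le_ofReal
    have := Real.rpow_nonneg (hs n) r
    gcongr
    calc (1 + ρ n) ^ (-N * r) = 2 ^ (N * r) * (2 * (1 + ρ n)) ^ (-(N * r)) := by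
          rw [Real.mul_rpow (by norm_num) h1p.le, ← mul_assoc, ← Real.rpow_add (by norm_num)]
          simp
      _ ≤ _ := by
          gcongr ?_ * ?_
          exact Real.rpow_le_rpow_of_nonpos (by positivity) hkm (by linarith)
  have hmain : (∑' n, ENNReal.ofReal (s n * (1 + ρ n) ^ (-N))) ^ r ≤ ENNReal.ofReal K * M ^ r := by
    refine (tsum_rpow_le _ hr0 hr1).trans ?_
    refine (ENNReal.tsum_le_tsum hterm).trans ?_
    rw [ENNReal.tsum_comm]
    have hk : ∀ k : ℕ, (∑' n, ENNReal.ofReal (2 ^ (N * r) * (2 ^ k) ^ (-(N * r))) *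
        Set.indicator {n | ρ n < 2 ^ k} (fun n => ENNReal.ofReal (s n ^ r)) n) ≤
        ENNReal.ofReal (2 ^ (N * r) * C0 * q ^ k) * M ^ r := by
      intro k
      rw [ENNReal.tsum_mul_left, ← tsum_subtype]
      refine (mul_le_mul_right (key k) _).trans (le_of_eq ?_)
      rw [← mul_assoc, ← ENNReal.ofReal_mul (by positivity)]
      congr 2
      have hqk : q ^ k = (2 ^ k : ℝ) ^ ν * (2 ^ k) ^ (-(N * r)) := by
        rw [← Real.rpow_add (by positivity), ← sub_eq_add_neg, hq, Real.rpow_pow_comm (by norm_num)]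
      rw [hqk]
      ring
    refine (ENNReal.tsum_le_tsum hk).trans (le_of_eq ?_)
    rw [ENNReal.tsum_mul_right, ← ENNReal.ofReal_tsum_of_nonneg (fun k => by positivity)
      ((summable_geometric_of_lt_one hq0.le hq1).mul_left _), tsum_mul_left,
      tsum_geometric_of_lt_one hq0.le hq1]
  rw [← ENNReal.le_rpow_inv_iff hr0, ENNReal.mul_rpow_of_nonneg _ _ (by positivity),
    ENNReal.rpow_rpow_inv hr0.ne', ENNReal.ofReal_rpow_of_pos hK0, ← one_div] at hmain
  exact hmain
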